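/- arXiv:1606.05158 — 4 statements merged into one kernel-verified Lean document; each statement's English description precedes it below -/
import Mathlib

section
/- Let F : ℝⁿ → ℝ be convex, G : ℝᵖ → ℝ be convex and positively 1-homogeneous (G(t·x) = t·G(x) for all t ≥ 0 and x ∈ ℝᵖ), let Φ : ℝᵖ → ℝⁿ be a linear map and y ∈ ℝⁿ. Suppose x̂ ∈ ℝᵖ is a global minimizer of x ↦ F(y - Φ·x) + G(x). Then for every ε ∈ [0,1], the vector (1-ε)·x̂ is a global minimizer of x ↦ F(y - ε·Φ·x̂ - Φ·x) + G(x). -/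
/-!
Convexity and positive 1-homogeneity make `G` subadditive. Comparing `x̂` with the competitor
`x + ε x̂` in the original problem gives
`F(y - Φx̂) + G(x̂) ≤ F(y - εΦx̂ - Φx) + G(x) + ε G(x̂)`,
and moving `ε G(x̂)` to the left yields the claim, since `(1 - ε) G(x̂) = G((1 - ε) x̂)` and
`(1 - ε) x̂` has residual `y - Φx̂` in the shifted problem.
-/

/-- Lemma 22 of the paper: if `x̂` minimizes `x ↦ F(y - Φx) + G(x)`
with `F` convex and `G` convex and positively 1-homogeneous, then for every
`ε ∈ [0,1]`, `(1-ε)·x̂` minimizes `x ↦ F(y - ε·Φx̂ - Φx) + G(x)`. -/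
theorem scaled_minimizer_of_one_homogeneous
    (n p : ℕ)
    (F : (Fin n → ℝ) → ℝ) (hF : ConvexOn ℝ Set.univ F)
    (G : (Fin p → ℝ) → ℝ) (hG : ConvexOn ℝ Set.univ G)
    (hhom : ∀ t : ℝ, 0 ≤ t → ∀ x : Fin p → ℝ, G (t • x) = t * G x)
    (Φ : (Fin p → ℝ) →ₗ[ℝ] (Fin n → ℝ)) (y : Fin n → ℝ)
    (xhat : Fin p → ℝ)
    (hmin : ∀ x : Fin p → ℝ, F (y - Φ xhat) + G xhat ≤ F (y - Φ x) + G x) :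
    ∀ ε : ℝ, ε ∈ Set.Icc (0 : ℝ) 1 →
      ∀ x : Fin p → ℝ,
        F (y - ε • Φ xhat - Φ ((1 - ε) • xhat)) + G ((1 - ε) • xhat)
          ≤ F (y - ε • Φ xhat - Φ x) + G x := by
  intro ε hε x
  -- `G` is subadditive: apply convexity at the midpoint of `2a` and `2b`.
  have hsub : ∀ a b : Fin p → ℝ, G (a + b) ≤ G a + G b := by
    intro a b
    have h := hG.2 (Set.mem_univ ((2 : ℝ) • a)) (Set.mem_univ ((2 : ℝ) • b))
      (by norm_num : (0 : ℝ) ≤ 1 / 2) (by norm_num : (0 : ℝ) ≤ 1 / 2) (by norm_num)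
    rw [smul_smul, smul_smul, hhom 2 (by norm_num), hhom 2 (by norm_num)] at h
    norm_num at h
    linarith
  have hz := hmin (x + ε • xhat)
  have hG_add := hsub x (ε • xhat)
  rw [hhom ε hε.1] at hG_add
  have hres : y - ε • Φ xhat - Φ ((1 - ε) • xhat) = y - Φ xhat := by
    rw [map_smul]; module
  have hshift : y - Φ (x + ε • xhat) = y - ε • Φ xhat - Φ x := by
    rw [map_add, map_smul]; module
  rw [hshift] at hz
  rw [hres, hhom (1 - ε) (by linarith [hε.2])]
  linarith
end

section
/- Let x̂ : ℝⁿ → ℝᵖ be a map, Φ : ℝᵖ → ℝⁿ a linear map, and y ∈ ℝⁿ. Suppose x̂ is (Fréchet) differentiable at y with derivative J (a continuous linear map from ℝⁿ to ℝᵖ), and suppose the scaling identity x̂(y - ε·Φ(x̂(y))) = (1-ε)·x̂(y) holds for all ε ∈ [0,1]. Then J(Φ(x̂(y))) = x̂(y). -/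
/-- Theorem 20 of the paper: if `x̂` is Fréchet differentiable at `y`
with derivative `J`, and `x̂(y - ε·Φ(x̂(y))) = (1-ε)·x̂(y)` for all `ε ∈ [0,1]`,
then `J(Φ(x̂(y))) = x̂(y)`. -/
theorem jacobian_fixed_point
    (n p : ℕ)
    (xhat : EuclideanSpace ℝ (Fin n) → EuclideanSpace ℝ (Fin p))
    (Φ : EuclideanSpace ℝ (Fin p) →ₗ[ℝ] EuclideanSpace ℝ (Fin n))
    (y : EuclideanSpace ℝ (Fin n))
    (J : EuclideanSpace ℝ (Fin n) →L[ℝ] EuclideanSpace ℝ (Fin p))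
    (hdiff : HasFDerivAt xhat J y)
    (hscale : ∀ ε : ℝ, ε ∈ Set.Icc (0 : ℝ) 1 →
      xhat (y - ε • Φ (xhat y)) = (1 - ε) • xhat y) :
    J (Φ (xhat y)) = xhat y := by
  -- Both sides of the scaling identity are differentiable in `ε` at `0`; the identity only
  -- holds on `[0,1]`, where one-sided derivatives at `0` are still unique.
  have hline : HasDerivAt (fun ε : ℝ => y - ε • Φ (xhat y)) (-Φ (xhat y)) 0 := by
    simpa using ((hasDerivAt_id (0 : ℝ)).smul_const (Φ (xhat y))).const_sub y
  have hleft : HasDerivAt (fun ε : ℝ => xhat (y - ε • Φ (xhat y))) (J (-Φ (xhat y))) 0 :=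
    HasFDerivAt.comp_hasDerivAt (0 : ℝ) (by simpa using hdiff) hline
  have hright : HasDerivAt (fun ε : ℝ => (1 - ε) • xhat y) (-xhat y) 0 := by
    simpa using ((hasDerivAt_id (0 : ℝ)).const_sub 1).smul_const (xhat y)
  have hzero : (0 : ℝ) ∈ Set.Icc (0 : ℝ) 1 := ⟨le_rfl, zero_le_one⟩
  have hunique : UniqueDiffWithinAt ℝ (Set.Icc (0 : ℝ) 1) 0 :=
    uniqueDiffOn_Icc zero_lt_one 0 hzero
  have hright_deriv := hright.hasDerivWithinAt.congr_of_mem hscale hzero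
  have heq := hunique.eq_deriv _ hleft.hasDerivWithinAt hright_deriv
  simpa using heq
end

section
/- Let λ > 0, α > 0, σ > 0 and β with 0 < β < σ·α. Let Γ be a real m×p matrix, x⋆ ∈ ℝᵖ, z⋆ ∈ ℝᵐ, and let I = { i : (Γ·x⋆)ᵢ ≠ 0 }. Assume: (i) for every i ∈ I, z⋆ᵢ = λ·sign((Γ·x⋆)ᵢ) and |(Γ·x⋆)ᵢ| ≥ α; (ii) for every i ∉ I, |z⋆ᵢ| ≤ λ. Let (zᵏ) and (vᵏ) be sequences with zᵏ → z⋆ in ℝᵐ and vᵏ → x⋆ in ℝᵖ. Then there exists N such that for all k ≥ N and all indices i ∈ {1,…,m}: |(zᵏ + σ·Γ·vᵏ)ᵢ| ≤ λ + β if and only if (Γ·x⋆)ᵢ = 0. -/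
open Filter Matrix

/-!
The map `(z, v) ↦ z + σ • Γ v` is continuous, so `|(zᵏ + σ Γ vᵏ)ᵢ|` converges to
`|z⋆ᵢ + σ (Γ x⋆)ᵢ|`. Off the support this limit is `|z⋆ᵢ| ≤ λ < λ + β`; on the support the two
terms have the same sign, so it equals `λ + σ |(Γ x⋆)ᵢ| ≥ λ + σ α > λ + β`. The limit thus lies
strictly on one side of the threshold for each `i`, and there are finitely many `i`.
-/

/-- Theorem 21 of the paper, support identification: for sequences
`zᵏ → z⋆`, `vᵏ → x⋆`, eventually `|(zᵏ + σ·Γ·vᵏ)ᵢ| ≤ λ + β` holds exactly on the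
complement of the support of `Γ·x⋆`. -/
theorem finite_time_support_identification
    (m p : ℕ)
    (lam α σ β : ℝ) (hlam : 0 < lam) (hα : 0 < α) (hσ : 0 < σ)
    (hβ0 : 0 < β) (hβ : β < σ * α)
    (Γ : Matrix (Fin m) (Fin p) ℝ) (xstar : Fin p → ℝ) (zstar : Fin m → ℝ)
    (hsupp : ∀ i : Fin m, Γ.mulVec xstar i ≠ 0 →
      zstar i = lam * Real.sign (Γ.mulVec xstar i) ∧ α ≤ |Γ.mulVec xstar i|)
    (hcosupp : ∀ i : Fin m, Γ.mulVec xstar i = 0 → |zstar i| ≤ lam)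
    (zk : ℕ → Fin m → ℝ) (vk : ℕ → Fin p → ℝ)
    (hz : Tendsto zk atTop (nhds zstar))
    (hv : Tendsto vk atTop (nhds xstar)) :
    ∃ N : ℕ, ∀ k ≥ N, ∀ i : Fin m,
      |(zk k + σ • Γ.mulVec (vk k)) i| ≤ lam + β ↔ Γ.mulVec xstar i = 0 := by
  have hlim : ∀ i, Tendsto (fun k => |(zk k + σ • Γ.mulVec (vk k)) i|) atTop
      (nhds |(zstar + σ • Γ.mulVec xstar) i|) := by
    intro i
    have hΓ : Tendsto (fun k => Γ.mulVec (vk k)) atTop (nhds (Γ.mulVec xstar)) :=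
      ((continuous_const.matrix_mulVec continuous_id).tendsto xstar).comp hv
    exact (tendsto_pi_nhds.1 (hz.add (hΓ.const_smul σ)) i).abs
  rw [← eventually_atTop, eventually_all]
  intro i
  by_cases h : Γ.mulVec xstar i = 0
  · have hlt : |(zstar + σ • Γ.mulVec xstar) i| < lam + β := by
      have := hcosupp i h
      simp only [Pi.add_apply, Pi.smul_apply, h, smul_zero, add_zero]
      linarith
    filter_upwards [(hlim i).eventually_lt_const hlt] with k hk
    exact iff_of_true hk.le h
  · obtain ⟨hzi, hαi⟩ := hsupp i h
    have hgt : lam + β < |(zstar + σ • Γ.mulVec xstar) i| := by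
      have hmul : σ * α ≤ σ * |Γ.mulVec xstar i| := mul_le_mul_of_nonneg_left hαi hσ.le
      simp only [Pi.add_apply, Pi.smul_apply, smul_eq_mul, hzi]
      rcases lt_or_gt_of_ne h with hneg | hpos
      · rw [Real.sign_of_neg hneg]
        rw [abs_of_neg hneg] at hmul
        exact lt_of_lt_of_le (by linarith) (neg_le_abs _)
      · rw [Real.sign_of_pos hpos]
        rw [abs_of_pos hpos] at hmul
        exact lt_of_lt_of_le (by linarith) (le_abs_self _)
    filter_upwards [(hlim i).eventually_const_lt hgt] with k hk
    exact iff_of_false hk.not_ge h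
end

section
/- Let y ∈ ℝ and λ > 0, and define the hard-thresholding objective E(x) = ½·(x - y)² + (λ²/2)·c(x), where c(x) = 0 if x = 0 and c(x) = 1 otherwise. If |y| ≤ λ, then E(0) ≤ E(x) for all x ∈ ℝ; if |y| ≥ λ, then E(y) ≤ E(x) for all x ∈ ℝ. In other words, the hard-thresholding of y at level λ (keeping y when |y| > λ, setting it to 0 when |y| ≤ λ) minimizes E. -/
/-- The hard-thresholding of `y` at level `λ` minimizes
`E(x) = ½(x - y)² + (λ²/2)·𝟙[x ≠ 0]`: if `|y| ≤ λ` then `0` is a minimizer,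
and if `|y| ≥ λ` then `y` is a minimizer. -/
theorem hard_thresholding_minimizes
    (y lam : ℝ) (hlam : 0 < lam)
    (E : ℝ → ℝ)
    (hE : ∀ x : ℝ, E x = (1 / 2) * (x - y) ^ 2
            + (lam ^ 2 / 2) * (if x = 0 then (0 : ℝ) else 1)) :
    (|y| ≤ lam → ∀ x : ℝ, E 0 ≤ E x) ∧
    (lam ≤ |y| → ∀ x : ℝ, E y ≤ E x) := by
  -- `E 0 = y² / 2`, while any `x ≠ 0` costs at least `lam² / 2`, attained at `x = y`;
  -- both claims reduce to comparing `y²` with `lam²`.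
  constructor
  · intro h x
    have hsq : y ^ 2 ≤ lam ^ 2 := sq_le_sq' (abs_le.mp h).1 (abs_le.mp h).2
    rw [hE, hE x]
    by_cases hx : x = 0
    · simp [hx]
    · simp only [hx, if_true, if_false]
      nlinarith [sq_nonneg (x - y)]
  · intro h x
    have hsq : lam ^ 2 ≤ y ^ 2 := by
      rw [← sq_abs y]
      exact pow_le_pow_left₀ hlam.le h 2
    have hy : y ≠ 0 := abs_pos.mp (hlam.trans_le h)
    rw [hE, hE x]
    by_cases hx : x = 0
    · simp only [hx, hy, if_true, if_false]
      nlinarith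
    · simp only [hx, hy, if_false]
      nlinarith [sq_nonneg (x - y)]
end
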